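/- Let H : ℝ³∖{0} → ℝ be smooth and homogeneous of degree 0, and define F : ℝ³∖{0} → ℝ by F(v) := ‖v‖ · H(v/‖v‖) (so F(v) = ‖v‖·H(v) by homogeneity). Then for every θ ∈ (0,π) and φ, the gradient of F at the point ℓ(θ,φ) equals the surface point x(θ,φ) = H ℓ + (ð̄H) m + (ðH) conj(m); that is, the surface with stutzfunction H is parametrised by the gradient of the degree-1 homogeneous extension of H evaluated on the unit sphere. -/

import Mathlib

noncomputable section

/-- The unit radial vector `ℓ(θ,φ) = (sinθ cosφ, sinθ sinφ, cosθ)` as a point of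
Euclidean `ℝ³`. -/
def sphL (θ φ : ℝ) : EuclideanSpace ℝ (Fin 3) :=
  (WithLp.equiv 2 (Fin 3 → ℝ)).symm
    ![Real.sin θ * Real.cos φ, Real.sin θ * Real.sin φ, Real.cos θ]

/-- The complex vector `m(θ,φ) = (1/√2)(cosθcosφ − i sinφ, cosθsinφ + i cosφ, −sinθ)`. -/
def sphM (θ φ : ℝ) : Fin 3 → ℂ :=
  ![(Real.sqrt 2 : ℂ)⁻¹ *
      (Complex.ofReal (Real.cos θ * Real.cos φ) - Complex.I * Complex.ofReal (Real.sin φ)),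
    (Real.sqrt 2 : ℂ)⁻¹ *
      (Complex.ofReal (Real.cos θ * Real.sin φ) + Complex.I * Complex.ofReal (Real.cos φ)),
    (Real.sqrt 2 : ℂ)⁻¹ * (-Complex.ofReal (Real.sin θ))]

/-- The Newman–Penrose operator `ð` on a spin-weight `s` function. -/
def eth (s : ℤ) (η : ℝ → ℝ → ℂ) (θ φ : ℝ) : ℂ :=
  (Real.sqrt 2 : ℂ)⁻¹ * (Real.sin θ : ℂ) ^ s *
    (deriv (fun t => (Real.sin t : ℂ) ^ (-s) * η t φ) θ +
      Complex.I / (Real.sin θ : ℂ) * deriv (fun p => (Real.sin θ : ℂ) ^ (-s) * η θ p) φ)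

/-- The operator `ð̄` on a spin-weight `s` function. -/
def ethbar (s : ℤ) (η : ℝ → ℝ → ℂ) (θ φ : ℝ) : ℂ :=
  (Real.sqrt 2 : ℂ)⁻¹ * (Real.sin θ : ℂ) ^ (-s) *
    (deriv (fun t => (Real.sin t : ℂ) ^ s * η t φ) θ -
      Complex.I / (Real.sin θ : ℂ) * deriv (fun p => (Real.sin θ : ℂ) ^ s * η θ p) φ)

/-- The stutzfunction in spherical coordinates, as a complex-valued function. -/
def HC (H : EuclideanSpace ℝ (Fin 3) → ℝ) (θ φ : ℝ) : ℂ := (H (sphL θ φ) : ℂ)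

/-- The surface point `x(θ,φ) = H ℓ + (ð̄H) m + (ðH) conj(m)` (a real vector), as a point of
Euclidean `ℝ³`. -/
def surf (H : EuclideanSpace ℝ (Fin 3) → ℝ) (θ φ : ℝ) : EuclideanSpace ℝ (Fin 3) :=
  (WithLp.equiv 2 (Fin 3 → ℝ)).symm fun i =>
    (HC H θ φ * ((sphL θ φ) i : ℂ) + ethbar 0 (HC H) θ φ * sphM θ φ i +
      eth 0 (HC H) θ φ * (starRingEnd ℂ) (sphM θ φ i)).re

/-!
`F` depends only on the restriction of `H` to the unit sphere, and the map `v ↦ v / ‖v‖` has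
derivative at a unit vector `ℓ` equal to the orthogonal projection onto `ℓᗮ`. By the product rule
`∇F(ℓ)` is therefore `H(ℓ) ℓ` plus the tangential part of `∇H(ℓ)`. In the orthonormal frame
`ℓ, e_θ, e_φ` of spherical coordinates one has `∂_θ ℓ = e_θ`, `∂_φ ℓ = sin θ e_φ` and
`√2 m = e_θ + i e_φ`, so `√2 ðH = ⟪∇H, e_θ⟫ + i ⟪∇H, e_φ⟫`. As `ð̄H` is the conjugate of `ðH`,
`(ð̄H) m + (ðH) conj(m) = 2 Re (conj(ðH) m)` is exactly that tangential part.
-/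

open Real ComplexConjugate
open Complex (I)
open scoped RealInnerProductSpace

section InnerProductSpace

variable {E : Type*} [NormedAddCommGroup E] [InnerProductSpace ℝ E]

theorem hasFDerivAt_norm_of_ne_zero {x : E} (hx : x ≠ 0) :
    HasFDerivAt (fun v : E => ‖v‖) (‖x‖⁻¹ • innerSL ℝ x) x := by
  have hsqrt := (hasStrictFDerivAt_norm_sq x).hasFDerivAt.sqrt (by simpa using hx)
  simp only [sqrt_sq (norm_nonneg _)] at hsqrt
  refine hsqrt.congr_fderiv ?_
  ext w
  simp only [smul_apply, innerSL_apply_apply, smul_eq_mul, nsmul_eq_mul]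
  field_simp
  norm_num

theorem hasFDerivAt_inv_norm_smul {x : E} (hx : x ≠ 0) :
    HasFDerivAt (fun v : E => ‖v‖⁻¹ • v) (‖x‖⁻¹ • (ℝ ∙ x)ᗮ.starProjection) x := by
  have hinv := (hasDerivAt_inv (norm_ne_zero_iff.2 hx)).comp_hasFDerivAt x
    (hasFDerivAt_norm_of_ne_zero hx)
  refine (hinv.smul (hasFDerivAt_id x)).congr_fderiv ?_
  ext w
  have hcoeff : (‖x‖ ^ 2)⁻¹ * ‖x‖⁻¹ * ⟪x, w⟫ = ‖x‖⁻¹ * (⟪x, w⟫ / ‖x‖ ^ 2) := by ring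
  simp [Submodule.starProjection_orthogonal_val, Submodule.starProjection_singleton, smul_smul,
    hcoeff, sub_eq_add_neg]

theorem hasDerivAt_comp_of_hasGradientAt [CompleteSpace E] {f : E → ℝ} {g : E} {c : ℝ → E}
    {c' : E} {t : ℝ} (hf : HasGradientAt f g (c t)) (hc : HasDerivAt c c' t) :
    HasDerivAt (fun u => f (c u)) ⟪g, c'⟫ t :=
  hf.hasFDerivAt.comp_hasDerivAt t hc

theorem hasGradientAt_norm_mul_comp_inv_norm_smul [CompleteSpace E] {f : E → ℝ} {g x : E}
    (hx : x ≠ 0) (hf : HasGradientAt f g (‖x‖⁻¹ • x)) :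
    HasGradientAt (fun v => ‖v‖ * f (‖v‖⁻¹ • v))
      (f (‖x‖⁻¹ • x) • ‖x‖⁻¹ • x + (ℝ ∙ x)ᗮ.starProjection g) x := by
  have hcomp := hf.hasFDerivAt.comp (f := fun v : E => ‖v‖⁻¹ • v) x (hasFDerivAt_inv_norm_smul hx)
  refine hasGradientAt_iff_hasFDerivAt.2
    (((hasFDerivAt_norm_of_ne_zero hx).mul hcomp).congr_fderiv ?_)
  ext w
  have hnorm : ‖x‖ ≠ 0 := norm_ne_zero_iff.2 hx
  simp [Submodule.inner_starProjection_left_eq_right, mul_inv_cancel_left₀ hnorm, inner_sub_right,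
    add_comm]

theorem starProjection_orthogonal_span_singleton_eq_sum {ι : Type*} [Fintype ι] [DecidableEq ι]
    (b : OrthonormalBasis ι ℝ E) (i : ι) (g : E) :
    (ℝ ∙ b i)ᗮ.starProjection g = ∑ j ∈ Finset.univ.erase i, ⟪b j, g⟫ • b j := by
  rw [Submodule.starProjection_orthogonal_val,
    Submodule.starProjection_unit_singleton ℝ (b.norm_eq_one i), sub_eq_iff_eq_add',
    Finset.add_sum_erase _ (fun j => ⟪b j, g⟫ • b j) (Finset.mem_univ i), b.sum_repr']

end InnerProductSpace

section SphericalFrame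

/-- The unit tangent vector `e_θ` of the sphere at `ℓ(θ,φ)` along the meridian, in the direction
of increasing `θ`. -/
def sphTheta (θ φ : ℝ) : EuclideanSpace ℝ (Fin 3) :=
  !₂[cos θ * cos φ, cos θ * sin φ, -sin θ]

/-- The unit tangent vector `e_φ` of the sphere at `ℓ(θ,φ)` along the circle of latitude, in the
direction of increasing `φ`; it does not depend on `θ`. -/
def sphPhi (φ : ℝ) : EuclideanSpace ℝ (Fin 3) :=
  !₂[-sin φ, cos φ, 0]

theorem orthonormal_sphL_sphTheta_sphPhi (θ φ : ℝ) :
    Orthonormal ℝ ![sphL θ φ, sphTheta θ φ, sphPhi φ] := by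
  have hθ := Real.sin_sq_add_cos_sq θ
  have hφ := Real.sin_sq_add_cos_sq φ
  rw [orthonormal_iff_ite]
  intro i j
  fin_cases i <;> fin_cases j <;>
    simp only [sphL, sphTheta, sphPhi, WithLp.equiv_symm_apply, PiLp.inner_apply,
      Fin.sum_univ_three, Fin.zero_eta, Fin.mk_one, Fin.reduceFinMk, Fin.reduceEq, Fin.isValue,
      Matrix.cons_val, RCLike.inner_apply, conj_trivial, ↓reduceIte] <;>
    grind

/-- The orthonormal frame `ℓ, e_θ, e_φ` of spherical coordinates, in this order. -/
def sphFrame (θ φ : ℝ) : OrthonormalBasis (Fin 3) ℝ (EuclideanSpace ℝ (Fin 3)) :=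
  (basisOfOrthonormalOfCardEqFinrank (orthonormal_sphL_sphTheta_sphPhi θ φ)
    (by simp)).toOrthonormalBasis (by simpa using orthonormal_sphL_sphTheta_sphPhi θ φ)

theorem coe_sphFrame (θ φ : ℝ) : ⇑(sphFrame θ φ) = ![sphL θ φ, sphTheta θ φ, sphPhi φ] := by
  simp [sphFrame]

theorem norm_sphL (θ φ : ℝ) : ‖sphL θ φ‖ = 1 :=
  (orthonormal_sphL_sphTheta_sphPhi θ φ).1 0

theorem sphL_ne_zero (θ φ : ℝ) : sphL θ φ ≠ 0 :=
  norm_ne_zero_iff.1 ((norm_sphL θ φ).trans_ne one_ne_zero)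

theorem starProjection_orthogonal_span_sphL (θ φ : ℝ) (g : EuclideanSpace ℝ (Fin 3)) :
    (ℝ ∙ sphL θ φ)ᗮ.starProjection g =
      ⟪sphTheta θ φ, g⟫ • sphTheta θ φ + ⟪sphPhi φ, g⟫ • sphPhi φ := by
  have hproj := starProjection_orthogonal_span_singleton_eq_sum (sphFrame θ φ) 0 g
  have herase : Finset.univ.erase (0 : Fin 3) = {1, 2} := by decide
  simpa [coe_sphFrame, herase] using hproj

theorem hasDerivAt_sphL_left (θ φ : ℝ) :
    HasDerivAt (fun t => sphL t φ) (sphTheta θ φ) θ := by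
  refine (PiLp.continuousLinearEquiv 2 ℝ (fun _ : Fin 3 => ℝ)).symm.hasFDerivAt.comp_hasDerivAt θ
    (hasDerivAt_pi.2 fun i => ?_)
  fin_cases i
  · exact (Real.hasDerivAt_sin θ).mul_const (cos φ)
  · exact (Real.hasDerivAt_sin θ).mul_const (sin φ)
  · exact Real.hasDerivAt_cos θ

theorem hasDerivAt_sphL_right (θ φ : ℝ) :
    HasDerivAt (sphL θ) (sin θ • sphPhi φ) φ := by
  refine (PiLp.continuousLinearEquiv 2 ℝ (fun _ : Fin 3 => ℝ)).symm.hasFDerivAt.comp_hasDerivAt φ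
    (hasDerivAt_pi.2 fun i => ?_)
  fin_cases i
  · exact (Real.hasDerivAt_cos φ).const_mul (sin θ)
  · exact (Real.hasDerivAt_sin φ).const_mul (sin θ)
  · simpa [sphPhi] using hasDerivAt_const φ (cos θ)

theorem sphM_eq_sphTheta_add_I_mul_sphPhi (θ φ : ℝ) (i : Fin 3) :
    sphM θ φ i = (√2 : ℂ)⁻¹ * (sphTheta θ φ i + I * sphPhi φ i) := by
  fin_cases i <;> simp [sphM, sphTheta, sphPhi, sub_eq_add_neg]

end SphericalFrame

section Eth

theorem deriv_conj (f : ℝ → ℂ) (t : ℝ) :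
    deriv (fun u => conj (f u)) t = conj (deriv f t) :=
  deriv.star

theorem ethbar_eq_conj_eth_neg (s : ℤ) (η : ℝ → ℝ → ℂ) (θ φ : ℝ) :
    ethbar s η θ φ = conj (eth (-s) (fun t p => conj (η t p)) θ φ) := by
  simp only [eth, ethbar, neg_neg, map_mul, map_add, map_inv₀, map_div₀, map_zpow₀,
    Complex.conj_ofReal, Complex.conj_I, ← deriv_conj, Complex.conj_conj, neg_div, neg_mul,
    sub_eq_add_neg]

theorem ethbar_zero_HC (H : EuclideanSpace ℝ (Fin 3) → ℝ) (θ φ : ℝ) :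
    ethbar 0 (HC H) θ φ = conj (eth 0 (HC H) θ φ) := by
  simp only [ethbar_eq_conj_eth_neg, HC, Complex.conj_ofReal, neg_zero]
  rfl

theorem re_conj_mul_add_mul_conj_inv_sqrt_two (a b u v : ℝ) :
    (conj ((√2 : ℂ)⁻¹ * (a + I * b)) * ((√2 : ℂ)⁻¹ * (u + I * v)) +
      (√2 : ℂ)⁻¹ * (a + I * b) * conj ((√2 : ℂ)⁻¹ * (u + I * v))).re = a * u + b * v := by
  have hsqrt : (√2)⁻¹ * (√2)⁻¹ = (2 : ℝ)⁻¹ := by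
    rw [← mul_inv, mul_self_sqrt zero_le_two]
  simp only [← Complex.ofReal_inv, map_mul, map_add, Complex.conj_ofReal, Complex.conj_I,
    Complex.add_re, Complex.add_im, Complex.mul_re, Complex.mul_im, Complex.neg_re, Complex.neg_im,
    Complex.ofReal_re, Complex.ofReal_im, Complex.I_re, Complex.I_im]
  linear_combination 2 * (a * u + b * v) * hsqrt

variable {H : EuclideanSpace ℝ (Fin 3) → ℝ} {g : EuclideanSpace ℝ (Fin 3)} {θ φ : ℝ}

theorem eth_zero_HC_of_hasGradientAt (hθ : sin θ ≠ 0) (hg : HasGradientAt H g (sphL θ φ)) :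
    eth 0 (HC H) θ φ = (√2 : ℂ)⁻¹ * (⟪sphTheta θ φ, g⟫ + I * ⟪sphPhi φ, g⟫) := by
  have hderivθ : deriv (fun t => HC H t φ) θ = ⟪sphTheta θ φ, g⟫ := by
    rw [real_inner_comm]
    exact (hasDerivAt_comp_of_hasGradientAt (c := (sphL · φ)) hg
      (hasDerivAt_sphL_left θ φ)).ofReal_comp.deriv
  have hderivφ : deriv (HC H θ) φ = sin θ * ⟪sphPhi φ, g⟫ := by
    rw [real_inner_comm, ← Complex.ofReal_mul, ← real_inner_smul_right]
    exact (hasDerivAt_comp_of_hasGradientAt hg (hasDerivAt_sphL_right θ φ)).ofReal_comp.deriv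
  have hsin : (sin θ : ℂ) ≠ 0 := Complex.ofReal_ne_zero.2 hθ
  simp only [eth, neg_zero, zpow_zero, one_mul, mul_one, hderivθ, hderivφ]
  rw [← mul_assoc, div_mul_cancel₀ _ hsin]

theorem surf_eq_of_hasGradientAt (hθ : sin θ ≠ 0) (hg : HasGradientAt H g (sphL θ φ)) :
    surf H θ φ = H (sphL θ φ) • sphL θ φ +
      (⟪sphTheta θ φ, g⟫ • sphTheta θ φ + ⟪sphPhi φ, g⟫ • sphPhi φ) := by
  ext i
  simp only [surf, WithLp.equiv_symm_apply, PiLp.add_apply, PiLp.smul_apply, smul_eq_mul]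
  rw [ethbar_zero_HC, eth_zero_HC_of_hasGradientAt hθ hg, sphM_eq_sphTheta_add_I_mul_sphPhi,
    add_assoc, Complex.add_re, re_conj_mul_add_mul_conj_inv_sqrt_two, HC, ← Complex.ofReal_mul,
    Complex.ofReal_re]

end Eth

theorem stmt9_general {H : EuclideanSpace ℝ (Fin 3) → ℝ} {θ φ : ℝ} (hθ : sin θ ≠ 0)
    (hH : DifferentiableAt ℝ H (sphL θ φ)) :
    HasGradientAt (fun v => ‖v‖ * H (‖v‖⁻¹ • v)) (surf H θ φ) (sphL θ φ) := by
  have hunit : ‖sphL θ φ‖⁻¹ • sphL θ φ = sphL θ φ := by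
    rw [norm_sphL, inv_one, one_smul]
  have hgrad := hasGradientAt_norm_mul_comp_inv_norm_smul (sphL_ne_zero θ φ)
    (hunit.symm ▸ hH.hasGradientAt)
  rwa [hunit, starProjection_orthogonal_span_sphL,
    ← surf_eq_of_hasGradientAt hθ hH.hasGradientAt] at hgrad

/-- The surface with stutzfunction `H` is parametrised by the gradient of the degree-1
homogeneous extension `F(v) = ‖v‖·H(v/‖v‖)` evaluated on the unit sphere:
`∇F(ℓ(θ,φ)) = x(θ,φ) = H ℓ + (ð̄H) m + (ðH) conj(m)`. -/
theorem stmt9 (H : EuclideanSpace ℝ (Fin 3) → ℝ)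
    (hH : ContDiffOn ℝ (⊤ : ℕ∞) H {v : EuclideanSpace ℝ (Fin 3) | v ≠ 0})
    (hhom : ∀ v : EuclideanSpace ℝ (Fin 3), v ≠ 0 → ∀ t : ℝ, 0 < t → H (t • v) = H v)
    (F : EuclideanSpace ℝ (Fin 3) → ℝ)
    (hF : F = fun v => ‖v‖ * H (‖v‖⁻¹ • v)) :
    ∀ θ ∈ Set.Ioo 0 Real.pi, ∀ φ : ℝ,
      gradient F (sphL θ φ) = surf H θ φ := by
  intro θ hθ φ
  have hdiff := (hH.contDiffAt (isOpen_ne.mem_nhds (sphL_ne_zero θ φ))).differentiableAt (by simp)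
  exact hF ▸ (stmt9_general (sin_pos_of_mem_Ioo hθ).ne' hdiff).gradient
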